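/- arXiv:2605.22450 — 2 statements merged into one kernel-verified Lean document; each statement's English description precedes it below -/
import Mathlib

section
/- Let ψ : 𝒟 → ℝ^n be a Lipschitz map defined on a set 𝒟 ⊆ ℝ^m, and let Γ := {(x, ψ(x)) : x ∈ 𝒟} ⊆ ℝ^m × ℝ^n be its graph. Assume Γ satisfies the Fubini property along the horizontal direction, i.e. dim_H(Γ) = dim_H(π_Y(Γ)) + ess-sup^α_{y ∈ ℝ^n} dim_H(π_Y^{-1}(y) ∩ Γ), where π_Y : ℝ^m × ℝ^n → ℝ^n is the coordinate projection and α = dim_H(π_Y(Γ)). Then dim_H(𝒟) = dim_H(ψ(𝒟)) + ess-sup^α_{y ∈ ℝ^n} dim_H(ψ^{-1}(y) ∩ 𝒟). -/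
/-!
The first projection is a Lipschitz inverse of `x ↦ (x, ψ x)`, so lifting a set to the graph of a
Lipschitz map preserves its Hausdorff dimension. The fibers of `π_Y` on the graph are the lifts of
the fibers of `ψ`, hence the Fubini identities for the graph and for `ψ` agree term by term.
-/

open MeasureTheory Set
open scoped ENNReal

noncomputable section

/-- `ess-sup^β_x f(x) = sup {q ≥ 0 : H^β({x : f(x) > q}) > 0}` (with `sup ∅ = 0`). -/
def essSupAt {X : Type*} [EMetricSpace X] [MeasurableSpace X] [BorelSpace X]
    (β : ℝ) (f : X → ℝ≥0∞) : ℝ≥0∞ :=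
  sSup {q : ℝ≥0∞ | 0 < μH[β] {x : X | q < f x}}

open scoped Classical in
/-- The essential supremum `ess-sup^α_x f(x)` relative to a base set with `α = dim_H base`:
it is `essSupAt α f` when `H^α(base) > 0`, and the limit (over `ε → 0⁺`, computed as the infimum
of the monotone family) of `essSupAt (α - ε) f` when `H^α(base) = 0`. -/
def essSupDim {X : Type*} [EMetricSpace X] [MeasurableSpace X] [BorelSpace X]
    (base : Set X) (f : X → ℝ≥0∞) : ℝ≥0∞ :=
  if 0 < μH[(dimH base).toReal] base then essSupAt (dimH base).toReal f
  else ⨅ (ε : ℝ) (_ : 0 < ε), essSupAt ((dimH base).toReal - ε) f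

/-- The graph `Γ = {(x, ψ(x)) : x ∈ 𝒟}` of a map `ψ` restricted to `𝒟`. -/
def graphOnSet {m n : ℕ} (ψ : EuclideanSpace ℝ (Fin m) → EuclideanSpace ℝ (Fin n))
    (D : Set (EuclideanSpace ℝ (Fin m))) :
    Set (EuclideanSpace ℝ (Fin m) × EuclideanSpace ℝ (Fin n)) :=
  {p | p.1 ∈ D ∧ p.2 = ψ p.1}

theorem graphOn_inter_snd_preimage {X Y : Type*} (ψ : X → Y) (S : Set X) (T : Set Y) :
    S.graphOn ψ ∩ Prod.snd ⁻¹' T = (S ∩ ψ ⁻¹' T).graphOn ψ :=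
  (image_inter_preimage (fun x => (x, ψ x)) S (Prod.snd ⁻¹' T)).symm

theorem graphOnSet_eq_graphOn {m n : ℕ} (ψ : EuclideanSpace ℝ (Fin m) → EuclideanSpace ℝ (Fin n))
    (D : Set (EuclideanSpace ℝ (Fin m))) : graphOnSet ψ D = D.graphOn ψ := by
  ext p
  rw [mem_graphOn, eq_comm (a := ψ p.1)]
  rfl

section LipschitzGraph

variable {X Y : Type*} [EMetricSpace X] [EMetricSpace Y] {ψ : X → Y} {K : NNReal} {D : Set X}

theorem dimH_graphOn (hψ : LipschitzOnWith K ψ D) : dimH (D.graphOn ψ) = dimH D := by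
  apply le_antisymm
  · exact (LipschitzWith.id.lipschitzOnWith.prodMk hψ).dimH_image_le
  · calc dimH D = dimH (Prod.fst '' D.graphOn ψ) := by rw [image_fst_graphOn]
      _ ≤ dimH (D.graphOn ψ) := LipschitzWith.prod_fst.dimH_image_le _

theorem dimH_graphOn_inter_snd_preimage (hψ : LipschitzOnWith K ψ D) (T : Set Y) :
    dimH (D.graphOn ψ ∩ Prod.snd ⁻¹' T) = dimH (D ∩ ψ ⁻¹' T) := by
  rw [graphOn_inter_snd_preimage, dimH_graphOn (hψ.mono inter_subset_left)]

/-- If `dimH (ψ '' D) = ∞`, then `essSupDim` takes the exponent `(∞ : ℝ≥0∞).toReal = 0`, but both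
identities then read `∞ = ∞ + _`. -/
theorem fubini_of_lipschitz_graph_general [MeasurableSpace Y] [BorelSpace Y]
    (hψ : LipschitzOnWith K ψ D) :
    dimH (D.graphOn ψ) = dimH (Prod.snd '' D.graphOn ψ) +
        essSupDim (Prod.snd '' D.graphOn ψ)
          (fun y => dimH (D.graphOn ψ ∩ Prod.snd ⁻¹' {y})) ↔
      dimH D = dimH (ψ '' D) + essSupDim (ψ '' D) (fun y => dimH (D ∩ ψ ⁻¹' {y})) := by
  simp only [dimH_graphOn hψ, image_snd_graphOn, dimH_graphOn_inter_snd_preimage hψ]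

end LipschitzGraph

/-- **Lemma.** If `ψ : 𝒟 ⊆ ℝ^m → ℝ^n` is Lipschitz and its graph `Γ` satisfies the Fubini
property along the horizontal direction `π_Y`, then
`dim_H 𝒟 = dim_H ψ(𝒟) + ess-sup^α_y dim_H (ψ⁻¹(y) ∩ 𝒟)` where `α = dim_H ψ(𝒟)`. -/
theorem fubini_of_lipschitz_graph
    (m n : ℕ) (D : Set (EuclideanSpace ℝ (Fin m)))
    (ψ : EuclideanSpace ℝ (Fin m) → EuclideanSpace ℝ (Fin n))
    (K : NNReal) (hLip : LipschitzOnWith K ψ D)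
    (hFub : dimH (graphOnSet ψ D) = dimH (Prod.snd '' graphOnSet ψ D) +
      essSupDim (Prod.snd '' graphOnSet ψ D)
        (fun y => dimH {p : EuclideanSpace ℝ (Fin m) × EuclideanSpace ℝ (Fin n) |
          p ∈ graphOnSet ψ D ∧ p.2 = y})) :
    dimH D = dimH (ψ '' D) +
      essSupDim (ψ '' D) (fun y => dimH {x | x ∈ D ∧ ψ x = y}) := by
  rw [graphOnSet_eq_graphOn] at hFub
  exact (fubini_of_lipschitz_graph_general hLip).mp hFub

end
end

section
/- For every nonempty set B ⊆ ℝ^m × ℝ^n, one has dim_H(π_X(B)) + ess-sup^α_{x ∈ ℝ^m} dim_H(π_X^{-1}(x) ∩ B) ≤ dim_H(B), where π_X : ℝ^m × ℝ^n → ℝ^m is the coordinate projection and α = dim_H(π_X(B)). -/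
/-!
Cover `B` by sets `E i` with `∑ diam (E i) ^ (t + r)` small. The images `π (E i)`, weighted by
`diam (E i) ^ t`, cover each `x` with total weight at least the `t`-dimensional content of the
fiber of `B` over `x`. If this content is bounded below on `A` and `r < s`, then summing a geometric
series with ratio `2 ^ (r - s)` singles out, for each `x ∈ A`, one dyadic scale that carries a
definite share of the weight, and at a fixed scale a maximal separated set is counted by the
weights. Hence `A` is null in dimension `s`, and so `dim A + t ≤ dim B` whenever the fibers over `A`
are not null in dimension `t`. No measurability is needed, because separated sets take the place of
Frostman measures. The essential supremum is handled by taking for `A` the superlevel sets of the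
fiber dimension, and by letting the exponent increase to `α` in the case `H^α(π(B)) = 0`.
-/

open MeasureTheory Set
open scoped ENNReal

noncomputable section

open Metric
open scoped NNReal

section HausdorffContent

variable {X : Type*} [PseudoEMetricSpace X] {d : ℝ} {A : Set X}

/-- The `d`-dimensional Hausdorff content: the infimum of `∑ diam (E i) ^ d` over all countable
covers, with no restriction on the size of the sets `E i`. Empty sets cost nothing, also when
`d ≤ 0`. -/
def hausdorffContent (X : Type*) [PseudoEMetricSpace X] (d : ℝ) : OuterMeasure X :=
  .boundedBy fun E ↦ ediam E ^ d

theorem hausdorffContent_le_ediam_rpow (d : ℝ) (A : Set X) :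
    hausdorffContent X d A ≤ ediam A ^ d :=
  OuterMeasure.boundedBy_le A

theorem exists_cover_of_hausdorffContent_lt {b : ℝ≥0∞} (h : hausdorffContent X d A < b) :
    ∃ E : ℕ → Set X, A ⊆ ⋃ i, E i ∧ ∑' i, ⨆ _ : (E i).Nonempty, ediam (E i) ^ d < b := by
  simpa only [hausdorffContent, OuterMeasure.boundedBy_apply, iInf_lt_iff, exists_prop] using h

theorem hausdorffContent_eq_zero_iff {X : Type*} [EMetricSpace X] [MeasurableSpace X]
    [BorelSpace X] (hd : 0 ≤ d) {A : Set X} :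
    hausdorffContent X d A = 0 ↔ μH[d] A = 0 := by
  rw [Measure.hausdorffMeasure_apply]
  refine ⟨fun hA ↦ ?_, fun hA ↦ ?_⟩
  · simp only [ENNReal.iSup_eq_zero]
    refine fun r hr ↦ le_antisymm (le_of_forall_gt fun η hη ↦ ?_) bot_le
    have hrd : 0 < r ^ d := by
      simp [pos_iff_ne_zero, ENNReal.rpow_eq_zero_iff, hr.ne', hd.not_gt]
    obtain ⟨E, hAE, hE⟩ := exists_cover_of_hausdorffContent_lt (hA.trans_lt (lt_min hη hrd))
    have hdiam (i : ℕ) : ediam (E i) ≤ r := by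
      rcases (E i).eq_empty_or_nonempty with hi | hi
      · simp [hi]
      by_contra! hri
      have hlt := (ENNReal.le_tsum i).trans_lt (hE.trans_le (min_le_right _ _))
      simp only [hi, iSup_pos] at hlt
      exact hlt.not_ge (ENNReal.rpow_le_rpow hri.le hd)
    exact (iInf₂_le_of_le E hAE (iInf_le _ hdiam)).trans_lt (hE.trans_le (min_le_left _ _))
  · rw [hausdorffContent, OuterMeasure.boundedBy_apply, ← le_zero_iff, ← hA]
    exact le_iSup₂_of_le ∞ ENNReal.zero_lt_top <| by simp

theorem exists_two_inv_pow_near {x : ℝ≥0∞} (hx₀ : x ≠ 0) (hx₁ : x ≤ 1) :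
    ∃ k : ℕ, x ≤ 2⁻¹ ^ k ∧ 2⁻¹ ^ k ≤ 2 * x := by
  lift x to ℝ≥0 using ne_top_of_le_ne_top ENNReal.one_ne_top hx₁
  obtain ⟨k, hlt, hle⟩ := exists_nat_pow_near_of_lt_one (y := (2⁻¹ : ℝ≥0))
    (pos_iff_ne_zero.2 (mod_cast hx₀)) (mod_cast hx₁) (by norm_num)
    (inv_lt_one_of_one_lt₀ one_lt_two)
  have hle' : (2⁻¹ : ℝ≥0) ^ k ≤ 2 * x := by
    rw [pow_succ, ← div_eq_mul_inv, div_lt_iff₀ two_pos] at hlt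
    exact (mul_comm 2 x ▸ hlt).le
  rw [← ENNReal.coe_ofNat, ← ENNReal.coe_inv two_ne_zero]
  exact ⟨k, mod_cast hle, mod_cast hle'⟩

theorem exists_dyadic_cover_of_hausdorffContent_eq_zero (hd : 0 < d)
    (hA : hausdorffContent X d A = 0) {η : ℝ≥0∞} (hη : η ≠ 0) :
    ∃ (E : ℕ → Set X) (k : ℕ → ℕ), A ⊆ ⋃ i, E i ∧ (∀ i, ediam (E i) ≤ 2⁻¹ ^ k i) ∧
      ∑' i, ((2⁻¹ : ℝ≥0∞) ^ k i) ^ d ≤ η := by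
  obtain ⟨b, hb₀, hb₁, hbη⟩ : ∃ b : ℝ≥0∞, b ≠ 0 ∧ b + b ≤ 1 ∧ 2 ^ d * (b + b) ≤ η := by
    have h2d : (2 : ℝ≥0∞) ^ d ≠ 0 ∧ (2 : ℝ≥0∞) ^ d ≠ ∞ := by simp
    refine ⟨min 1 (η / 2 ^ d) / 2, by simp [hη, h2d], ?_, ?_⟩ <;> rw [ENNReal.add_halves]
    · exact min_le_left _ _
    · exact (mul_le_mul_right (min_le_right _ _) _).trans_eq (ENNReal.mul_div_cancel h2d.1 h2d.2)
  obtain ⟨E, hAE, hE⟩ := exists_cover_of_hausdorffContent_lt (hA.trans_lt (pos_iff_ne_zero.2 hb₀))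
  obtain ⟨e, he₀, he⟩ := ENNReal.exists_pos_sum_of_countable' hb₀ ℕ
  -- Enlarging each `ediam (E i) ^ d` by `e i` gives singletons a scale as well.
  set v : ℕ → ℝ≥0∞ := fun i ↦ (⨆ _ : (E i).Nonempty, ediam (E i) ^ d) + e i with hv
  have hsum : ∑' i, v i ≤ b + b := by
    rw [ENNReal.tsum_add]
    exact add_le_add hE.le he.le
  have hv₁ (i : ℕ) : v i ^ d⁻¹ ≤ 1 :=
    ENNReal.rpow_le_one ((ENNReal.le_tsum i).trans (hsum.trans hb₁)) (inv_nonneg.2 hd.le)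
  have hv₀ (i : ℕ) : v i ^ d⁻¹ ≠ 0 := by
    simp [hv, ENNReal.rpow_eq_zero_iff, (he₀ i).ne', hd.le]
  choose k hvk hkv using fun i ↦ exists_two_inv_pow_near (hv₀ i) (hv₁ i)
  refine ⟨E, k, hAE, fun i ↦ le_trans ?_ (hvk i), ?_⟩
  · rcases (E i).eq_empty_or_nonempty with hi | hi
    · simp [hi]
    · simp [ENNReal.le_rpow_inv_iff hd, hv, hi]
  · calc ∑' i, ((2⁻¹ : ℝ≥0∞) ^ k i) ^ d ≤ ∑' i, 2 ^ d * v i := by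
          refine ENNReal.tsum_le_tsum fun i ↦ ?_
          grw [hkv i, ENNReal.mul_rpow_of_nonneg _ _ hd.le, ENNReal.rpow_inv_rpow hd.ne']
      _ ≤ η := by
          rw [ENNReal.tsum_mul_left]
          exact (mul_le_mul_right hsum _).trans hbη

end HausdorffContent

section WeightedCover

variable {X ι : Type*} [PseudoEMetricSpace X] {A : Set X} {S : ι → Set X} {w : ι → ℝ≥0∞}
  {a : ℝ≥0∞} {s : ℝ}

theorem hausdorffContent_le_mul_coveringNumber {ρ : ℝ≥0} (hρ : ρ ≠ 0) (hs : 0 ≤ s) (A : Set X) :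
    hausdorffContent X s A ≤ (2 * ρ) ^ s * coveringNumber ρ A := by
  by_cases htop : coveringNumber ρ A = ⊤
  · simp [htop, ENNReal.mul_top, ENNReal.rpow_eq_zero_iff, hρ, hs.not_gt]
  obtain ⟨N, -, hNfin, hAN, hNcard⟩ := exists_set_encard_eq_coveringNumber htop
  calc hausdorffContent X s A
      ≤ hausdorffContent X s (⋃ x ∈ N, closedEBall x ρ) :=
        measure_mono (isCover_iff_subset_iUnion_closedEBall.1 hAN)
    _ ≤ ∑' x : N, hausdorffContent X s (closedEBall (x : X) ρ) :=
        measure_biUnion_le _ hNfin.countable _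
    _ ≤ ∑' _ : N, (2 * ρ : ℝ≥0∞) ^ s := ENNReal.tsum_le_tsum fun x ↦
        (hausdorffContent_le_ediam_rpow s _).trans
          (ENNReal.rpow_le_rpow ediam_closedEBall_le hs)
    _ = (2 * ρ) ^ s * coveringNumber ρ A := by
        rw [ENNReal.tsum_const, mul_comm, ← hNcard]; rfl

theorem mul_packingNumber_le_tsum {ρ : ℝ≥0} (hS : ∀ i, ediam (S i) ≤ ρ)
    (hA : ∀ x ∈ A, a ≤ ∑' i, (S i).indicator (fun _ ↦ w i) x) :
    a * packingNumber ρ A ≤ ∑' i, w i := by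
  simp only [packingNumber, ENat.toENNReal_iSup, ENNReal.mul_iSup]
  refine iSup_le fun N ↦ iSup₂_le fun hNA hN ↦ ?_
  have hle (i : ι) : ∑' x : N, (S i).indicator (fun _ ↦ w i) (x : X) ≤ w i := by
    by_cases hi : ∃ x : N, (x : X) ∈ S i
    · obtain ⟨x, hx⟩ := hi
      rw [tsum_eq_single x, indicator_of_mem hx]
      refine fun y hyx ↦ indicator_of_notMem (fun hy ↦ ?_) _
      exact (hN y.2 x.2 (Subtype.coe_ne_coe.2 hyx)).not_ge
        ((edist_le_ediam_of_mem hy hx).trans (hS i))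
    · push Not at hi
      simp [hi]
  calc a * N.encard = ∑' _ : N, a := by rw [ENNReal.tsum_const, mul_comm]; rfl
    _ ≤ ∑' x : N, ∑' i, (S i).indicator (fun _ ↦ w i) (x : X) :=
        ENNReal.tsum_le_tsum fun x ↦ hA x (hNA x.2)
    _ = ∑' i, ∑' x : N, (S i).indicator (fun _ ↦ w i) (x : X) := ENNReal.tsum_comm
    _ ≤ ∑' i, w i := ENNReal.tsum_le_tsum hle

theorem mul_hausdorffContent_le_of_ediam_le {ρ : ℝ≥0} (hρ : ρ ≠ 0) (hs : 0 ≤ s)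
    (hS : ∀ i, ediam (S i) ≤ ρ) (hA : ∀ x ∈ A, a ≤ ∑' i, (S i).indicator (fun _ ↦ w i) x) :
    a * hausdorffContent X s A ≤ (2 * ρ) ^ s * ∑' i, w i :=
  calc a * hausdorffContent X s A
      ≤ a * ((2 * ρ) ^ s * packingNumber ρ A) := by
        grw [hausdorffContent_le_mul_coveringNumber hρ hs A, coveringNumber_le_packingNumber]
    _ = (2 * ρ) ^ s * (a * packingNumber ρ A) := mul_left_comm _ _ _
    _ ≤ (2 * ρ) ^ s * ∑' i, w i := by grw [mul_packingNumber_le_tsum hS hA]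

theorem exists_mul_geometric_le_of_le_tsum (ha : a ≠ ∞) {q : ℝ≥0∞} (hq : q < 1)
    {f : ℕ → ℝ≥0∞} (hf : a ≤ ∑' k, f k) : ∃ k, a * (1 - q) * q ^ k ≤ f k := by
  by_contra! hlt
  have hgeom : ∑' k, a * (1 - q) * q ^ k = a := by
    rw [ENNReal.tsum_mul_left, ENNReal.tsum_geometric, mul_assoc, ENNReal.mul_inv_cancel
      (tsub_pos_of_lt hq).ne' (ENNReal.sub_ne_top ENNReal.one_ne_top), mul_one]
  have hle : ∑' k, f k ≤ a := (ENNReal.tsum_le_tsum fun k ↦ (hlt k).le).trans_eq hgeom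
  have := ENNReal.tsum_lt_tsum (ne_top_of_le_ne_top ha hle) (fun k ↦ (hlt k).le) (hlt 0)
  exact (hf.trans_lt (this.trans_eq hgeom)).false

theorem mul_hausdorffContent_le_of_ediam_le_two_inv_pow {K : ℝ≥0} (hK : K ≠ 0) (hs : 0 ≤ s)
    (r : ℝ) (m : ℕ) (hS : ∀ i, ediam (S i) ≤ K * 2⁻¹ ^ m)
    (hA : ∀ x ∈ A, a * (2⁻¹ ^ (s - r)) ^ m ≤ ∑' i, (S i).indicator (fun _ ↦ w i) x) :
    a * hausdorffContent X s A ≤ (2 * K) ^ s * ∑' i, w i * (2⁻¹ ^ m) ^ r := by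
  set q : ℝ≥0∞ := 2⁻¹ ^ (s - r) with hq
  have hq₀ : q ^ m ≠ 0 := pow_ne_zero _ (by simp [hq])
  have hq_top : q ^ m ≠ ∞ := ENNReal.pow_ne_top (ENNReal.rpow_ne_top_of_ne_zero (by simp) (by simp))
  have hsplit : ((2⁻¹ : ℝ≥0∞) ^ m) ^ s = q ^ m * (2⁻¹ ^ m) ^ r := by
    have hqm : q ^ m = (2⁻¹ ^ m) ^ (s - r) := by
      rw [hq, ← ENNReal.rpow_natCast, ← ENNReal.rpow_natCast, ← ENNReal.rpow_mul,
        ← ENNReal.rpow_mul, mul_comm]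
    rw [hqm, ← ENNReal.rpow_add _ _ (by simp) (by simp), sub_add_cancel]
  have hρ : ((K * 2⁻¹ ^ m : ℝ≥0) : ℝ≥0∞) = K * 2⁻¹ ^ m := by simp [ENNReal.inv_pow]
  have hscale := mul_hausdorffContent_le_of_ediam_le (ρ := K * 2⁻¹ ^ m) (by simp [hK]) hs
    (fun i ↦ hρ ▸ hS i) hA
  rw [hρ] at hscale
  rw [← ENNReal.mul_le_mul_iff_right hq₀ hq_top]
  calc q ^ m * (a * hausdorffContent X s A)
      = a * q ^ m * hausdorffContent X s A := by ring
    _ ≤ (2 * (K * 2⁻¹ ^ m)) ^ s * ∑' i, w i := hscale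
    _ = q ^ m * ((2 * K) ^ s * ∑' i, w i * (2⁻¹ ^ m) ^ r) := by
        rw [← mul_assoc, ENNReal.mul_rpow_of_nonneg _ _ hs, hsplit, ENNReal.tsum_mul_right]
        ring

theorem mul_hausdorffContent_le_of_le_tsum_indicator {K : ℝ≥0} (hK : K ≠ 0) {r : ℝ} (hs : 0 ≤ s)
    (hrs : r < s) {k : ι → ℕ} (hS : ∀ i, ediam (S i) ≤ K * 2⁻¹ ^ k i) (ha : a ≠ ∞)
    (hA : ∀ x ∈ A, a ≤ ∑' i, (S i).indicator (fun _ ↦ w i) x) :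
    a * (1 - 2⁻¹ ^ (s - r)) * hausdorffContent X s A ≤
      (2 * K) ^ s * ∑' i, w i * (2⁻¹ ^ k i) ^ r := by
  set q : ℝ≥0∞ := 2⁻¹ ^ (s - r)
  have hq : q < 1 :=
    ENNReal.rpow_lt_one (ENNReal.inv_lt_one.2 ENNReal.one_lt_two) (sub_pos.2 hrs)
  -- `T m` collects the points whose sets of the single scale `2⁻¹ ^ m` already carry a geometric
  -- share of `a`; the factor `q ^ m` lost in its bound is exactly what lowers `s` to `r`.
  let T (m : ℕ) : Set X :=
    {x | a * (1 - q) * q ^ m ≤ ∑' i : k ⁻¹' {m}, (S i).indicator (fun _ ↦ w i) x}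
  have hAT : A ⊆ ⋃ m, T m := fun x hx ↦ mem_iUnion.2 <|
    exists_mul_geometric_le_of_le_tsum ha hq ((hA x hx).trans_eq
      (ENNReal.tsum_fiberwise _ k).symm)
  have hT (m : ℕ) : a * (1 - q) * hausdorffContent X s (T m) ≤
      (2 * K) ^ s * ∑' i : k ⁻¹' {m}, w i * (2⁻¹ ^ k i) ^ r := by
    have hk (i : k ⁻¹' {m}) : k i = m := i.2
    simp only [hk]
    exact mul_hausdorffContent_le_of_ediam_le_two_inv_pow hK hs r m
      (fun i ↦ (hS i).trans_eq (by rw [hk i])) fun _ hx ↦ hx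
  calc a * (1 - q) * hausdorffContent X s A
      ≤ a * (1 - q) * ∑' m, hausdorffContent X s (T m) := by
        grw [hAT, measure_iUnion_le]
    _ ≤ ∑' m, (2 * K) ^ s * ∑' i : k ⁻¹' {m}, w i * (2⁻¹ ^ k i) ^ r := by
        rw [← ENNReal.tsum_mul_left]
        exact ENNReal.tsum_le_tsum hT
    _ = (2 * K) ^ s * ∑' i, w i * (2⁻¹ ^ k i) ^ r := by
        rw [ENNReal.tsum_mul_left, ENNReal.tsum_fiberwise (fun i ↦ w i * (2⁻¹ ^ k i) ^ r)]

end WeightedCover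

section LipschitzFibers

variable {X Z : Type*} {K : ℝ≥0} {π : Z → X} {A : Set X} {B : Set Z} {q : ℝ≥0∞}

theorem hausdorffContent_fiber_le_tsum [PseudoEMetricSpace Z] {ι : Type*} [Countable ι] {t : ℝ}
    (ht : 0 ≤ t) {E : ι → Set Z} (hBE : B ⊆ ⋃ i, E i) {b : ι → ℝ≥0∞}
    (hE : ∀ i, ediam (E i) ≤ b i) (π : Z → X) (x : X) :
    hausdorffContent Z t (B ∩ π ⁻¹' {x}) ≤ ∑' i, (π '' E i).indicator (fun _ ↦ b i ^ t) x := by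
  calc hausdorffContent Z t (B ∩ π ⁻¹' {x})
      ≤ hausdorffContent Z t (⋃ i, E i ∩ π ⁻¹' {x}) := by
        rw [← iUnion_inter]
        exact measure_mono (inter_subset_inter_left _ hBE)
    _ ≤ ∑' i, hausdorffContent Z t (E i ∩ π ⁻¹' {x}) := measure_iUnion_le _
    _ ≤ ∑' i, (π '' E i).indicator (fun _ ↦ b i ^ t) x := by
        refine ENNReal.tsum_le_tsum fun i ↦ ?_
        rcases (E i ∩ π ⁻¹' {x}).eq_empty_or_nonempty with hi | ⟨p, hp, rfl⟩
        · simp [hi]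
        rw [indicator_of_mem (mem_image_of_mem π hp)]
        exact (hausdorffContent_le_ediam_rpow t _).trans
          (ENNReal.rpow_le_rpow ((ediam_mono inter_subset_left).trans (hE i)) ht)

theorem hausdorffContent_eq_zero_of_le_fiber [PseudoEMetricSpace X] [PseudoEMetricSpace Z]
    (hπ : LipschitzWith K π) {r s t : ℝ} (ht : 0 ≤ t) (htr : 0 < t + r) (hs : 0 ≤ s) (hrs : r < s)
    {c : ℝ≥0∞} (hc : c ≠ 0) (hA : ∀ x ∈ A, c ≤ hausdorffContent Z t (B ∩ π ⁻¹' {x}))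
    (hB : hausdorffContent Z (t + r) B = 0) : hausdorffContent X s A = 0 := by
  wlog hK : K ≠ 0 generalizing K
  · exact this (hπ.weaken (le_add_of_nonneg_right zero_le_one : K ≤ K + 1)) (by positivity)
  wlog hc_top : c ≠ ∞ generalizing c
  · obtain rfl := not_ne_iff.1 hc_top
    exact this one_ne_zero (fun x hx ↦ le_top.trans (hA x hx)) ENNReal.one_ne_top
  have hle : c * (1 - 2⁻¹ ^ (s - r)) * hausdorffContent X s A ≤ 0 := by
    refine le_of_forall_gt_imp_ge_of_dense fun η hη ↦ ?_
    have hC : (2 * K : ℝ≥0∞) ^ s ≠ ∞ := by finiteness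
    obtain ⟨E, k, hBE, hEk, hsum⟩ := exists_dyadic_cover_of_hausdorffContent_eq_zero htr hB
      (ENNReal.div_ne_zero.2 ⟨hη.ne', hC⟩)
    have hw : ∀ x ∈ A, c ≤ ∑' i, (π '' E i).indicator (fun _ ↦ (2⁻¹ ^ k i : ℝ≥0∞) ^ t) x :=
      fun x hx ↦ (hA x hx).trans (hausdorffContent_fiber_le_tsum ht hBE hEk π x)
    have hdiam (i : ℕ) : ediam (π '' E i) ≤ K * 2⁻¹ ^ k i :=
      (hπ.ediam_image_le _).trans (mul_le_mul_right (hEk i) _)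
    calc c * (1 - 2⁻¹ ^ (s - r)) * hausdorffContent X s A
        ≤ (2 * K) ^ s * ∑' i, (2⁻¹ ^ k i : ℝ≥0∞) ^ t * (2⁻¹ ^ k i) ^ r :=
          mul_hausdorffContent_le_of_le_tsum_indicator hK hs hrs hdiam hc_top hw
      _ = (2 * K) ^ s * ∑' i, (2⁻¹ ^ k i : ℝ≥0∞) ^ (t + r) := by
          simp_rw [ENNReal.rpow_add t r (ENNReal.pow_ne_zero (by simp) _)
            (ENNReal.pow_ne_top (by simp : (2⁻¹ : ℝ≥0∞) ≠ ∞))]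
      _ ≤ (2 * K) ^ s * (η / (2 * K) ^ s) := by grw [hsum]
      _ ≤ η := ENNReal.mul_div_le
  have hq : (2⁻¹ : ℝ≥0∞) ^ (s - r) < 1 :=
    ENNReal.rpow_lt_one (ENNReal.inv_lt_one.2 ENNReal.one_lt_two) (sub_pos.2 hrs)
  simpa [hc, (tsub_pos_of_lt hq).ne'] using hle

theorem hausdorffMeasure_eq_zero_of_fiber_ne_zero [EMetricSpace X] [MeasurableSpace X]
    [BorelSpace X] [EMetricSpace Z] [MeasurableSpace Z] [BorelSpace Z] (hπ : LipschitzWith K π)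
    {r s t : ℝ} (ht : 0 ≤ t) (htr : 0 < t + r) (hs : 0 ≤ s) (hrs : r < s)
    (hA : ∀ x ∈ A, μH[t] (B ∩ π ⁻¹' {x}) ≠ 0) (hB : μH[t + r] B = 0) : μH[s] A = 0 := by
  let S (n : ℕ) : Set X := {x | (n : ℝ≥0∞)⁻¹ ≤ hausdorffContent Z t (B ∩ π ⁻¹' {x})}
  have hAS : A ⊆ ⋃ n, S n := fun x hx ↦ mem_iUnion.2 <|
    (ENNReal.exists_inv_nat_lt ((hausdorffContent_eq_zero_iff ht).not.2 (hA x hx))).imp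
      fun _ ↦ le_of_lt
  refine measure_mono_null hAS (measure_iUnion_null fun n ↦ ?_)
  rw [← hausdorffContent_eq_zero_iff hs]
  exact hausdorffContent_eq_zero_of_le_fiber hπ ht htr hs hrs (by simp) (fun _ hx ↦ hx)
    ((hausdorffContent_eq_zero_iff htr.le).2 hB)

theorem dimH_add_le_of_hausdorffMeasure_fiber_ne_zero [EMetricSpace X] [EMetricSpace Z]
    [MeasurableSpace Z] [BorelSpace Z] (hπ : LipschitzWith K π) (hA₀ : A.Nonempty) {t : ℝ≥0}
    (hA : ∀ x ∈ A, μH[t] (B ∩ π ⁻¹' {x}) ≠ 0) : dimH A + t ≤ dimH B := by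
  borelize X
  have htB : t ≤ dimH B := by
    obtain ⟨x, hx⟩ := hA₀
    exact (le_dimH_of_hausdorffMeasure_ne_zero (hA x hx)).trans (dimH_mono inter_subset_left)
  refine le_of_forall_gt_imp_ge_of_dense fun u hu ↦ ?_
  rcases eq_or_ne u ∞ with rfl | hu_top
  · exact le_top
  lift u to ℝ≥0 using hu_top
  have htu : t < u := mod_cast htB.trans_lt hu
  suffices dimH A ≤ (u - t : ℝ≥0) by
    calc dimH A + t ≤ (u - t : ℝ≥0) + t := by gcongr
      _ = u := mod_cast tsub_add_cancel_of_le htu.le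
  by_contra! hlt
  obtain ⟨s, hs, hsA⟩ := ENNReal.lt_iff_exists_nnreal_btwn.1 hlt
  have hrs : (u - t : ℝ) < s := by
    rw [← NNReal.coe_sub htu.le]
    exact mod_cast hs
  have hB : μH[t + (u - t : ℝ)] B = 0 := by
    rw [add_sub_cancel]
    exact hausdorffMeasure_of_dimH_lt hu
  have hA_null : μH[s] A = 0 := hausdorffMeasure_eq_zero_of_fiber_ne_zero hπ t.coe_nonneg
    (by rw [add_sub_cancel]; exact mod_cast pos_of_gt htu) s.coe_nonneg hrs hA hB
  exact ENNReal.top_ne_zero ((hausdorffMeasure_of_lt_dimH hsA).symm.trans hA_null)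

theorem dimH_add_le_of_lt_dimH_fiber [EMetricSpace X] [EMetricSpace Z] (hπ : LipschitzWith K π)
    (hA₀ : A.Nonempty) (hA : ∀ x ∈ A, q < dimH (B ∩ π ⁻¹' {x})) : dimH A + q ≤ dimH B := by
  borelize Z
  obtain ⟨x, hx⟩ := hA₀
  lift q to ℝ≥0 using (hA x hx).ne_top
  exact dimH_add_le_of_hausdorffMeasure_fiber_ne_zero hπ ⟨x, hx⟩ fun y hy ↦ by
    simp [hausdorffMeasure_of_lt_dimH (hA y hy)]

theorem ofReal_le_dimH_of_hausdorffMeasure_ne_zero [EMetricSpace X] [MeasurableSpace X]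
    [BorelSpace X] {β : ℝ} (h : μH[β] A ≠ 0) : ENNReal.ofReal β ≤ dimH A := by
  rcases le_or_gt β 0 with hβ | hβ
  · simp [ENNReal.ofReal_of_nonpos hβ]
  · rw [← Real.coe_toNNReal β hβ.le] at h
    exact le_dimH_of_hausdorffMeasure_ne_zero h

theorem add_essSupAt_dimH_fiber_le [EMetricSpace X] [MeasurableSpace X] [BorelSpace X]
    [EMetricSpace Z] (hπ : LipschitzWith K π) {β : ℝ} (hβ : ENNReal.ofReal β ≤ dimH B) :
    ENNReal.ofReal β + essSupAt β (fun x ↦ dimH (B ∩ π ⁻¹' {x})) ≤ dimH B := by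
  rw [essSupAt]
  rcases eq_empty_or_nonempty {q | 0 < μH[β] {x | q < dimH (B ∩ π ⁻¹' {x})}} with h | h
  · simpa [h] using hβ
  rw [ENNReal.add_sSup h]
  refine iSup₂_le fun q hq ↦ ?_
  have hq₀ : μH[β] {x | q < dimH (B ∩ π ⁻¹' {x})} ≠ 0 := ne_of_gt hq
  calc ENNReal.ofReal β + q
      ≤ dimH {x | q < dimH (B ∩ π ⁻¹' {x})} + q := by
        grw [ofReal_le_dimH_of_hausdorffMeasure_ne_zero hq₀]
    _ ≤ dimH B := dimH_add_le_of_lt_dimH_fiber hπ (nonempty_of_measure_ne_zero hq₀) fun _ hx ↦ hx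

theorem dimH_proj_add_essSup_fiber_le_general [EMetricSpace X] [MeasurableSpace X] [BorelSpace X]
    [EMetricSpace Z] (hπ : LipschitzWith K π) (B : Set Z) :
    dimH (π '' B) + essSupDim (π '' B) (fun x ↦ dimH (B ∩ π ⁻¹' {x})) ≤ dimH B := by
  have hle : dimH (π '' B) ≤ dimH B := hπ.dimH_image_le B
  rcases eq_or_ne (dimH (π '' B)) ∞ with hα_top | hα_top
  · simp [top_le_iff.1 (hα_top ▸ hle)]
  set α := dimH (π '' B) with hα
  rw [essSupDim, ← hα]
  split_ifs
  · nth_rw 1 [← ENNReal.ofReal_toReal hα_top]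
    exact add_essSupAt_dimH_fiber_le hπ ((ENNReal.ofReal_toReal hα_top).trans_le hle)
  refine ENNReal.le_of_forall_pos_le_add fun ε hε _ ↦ ?_
  have hα_le : α ≤ ENNReal.ofReal (α.toReal - ε) + ε := by
    simpa [ENNReal.ofReal_toReal hα_top] using ENNReal.ofReal_add_le (p := α.toReal - ε) (q := ε)
  have hε_le : ENNReal.ofReal (α.toReal - ε) ≤ α :=
    ENNReal.ofReal_le_of_le_toReal (sub_le_self _ ε.2)
  calc α + ⨅ (η : ℝ) (_ : 0 < η), essSupAt (α.toReal - η) (fun x ↦ dimH (B ∩ π ⁻¹' {x}))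
      ≤ ENNReal.ofReal (α.toReal - ε) + ε +
          essSupAt (α.toReal - ε) (fun x ↦ dimH (B ∩ π ⁻¹' {x})) :=
        add_le_add hα_le (iInf₂_le (ε : ℝ) hε)
    _ = ENNReal.ofReal (α.toReal - ε) +
          essSupAt (α.toReal - ε) (fun x ↦ dimH (B ∩ π ⁻¹' {x})) + ε := add_right_comm _ _ _
    _ ≤ dimH B + ε := by grw [add_essSupAt_dimH_fiber_le hπ (hε_le.trans hle)]

end LipschitzFibers

/-- For every nonempty `B ⊆ ℝ^m × ℝ^n`,
`dim_H (π_X(B)) + ess-sup^α_x dim_H (π_X⁻¹(x) ∩ B) ≤ dim_H B`, where `α = dim_H (π_X(B))`. -/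
theorem dimH_proj_add_essSup_fiber_le
    (m n : ℕ) (B : Set (EuclideanSpace ℝ (Fin m) × EuclideanSpace ℝ (Fin n)))
    (hB : B.Nonempty) :
    dimH (Prod.fst '' B) +
      essSupDim (Prod.fst '' B)
        (fun x => dimH {p : EuclideanSpace ℝ (Fin m) × EuclideanSpace ℝ (Fin n) |
          p ∈ B ∧ p.1 = x}) ≤ dimH B :=
  dimH_proj_add_essSup_fiber_le_general LipschitzWith.prod_fst B

end
end
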